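/- Let K = ℚ(ζ) be the 7th cyclotomic field with ζ a primitive 7th root of unity. Let g = diag(ζ^4, ζ^2, ζ), let h be the permutation matrix with rows (0,1,0), (0,0,1), (1,0,0), and let i = ((2ζ^4 + 2ζ^2 + 2ζ + 1)/7) · [[ζ-ζ^6, ζ^2-ζ^5, ζ^4-ζ^3],[ζ^2-ζ^5, ζ^4-ζ^3, ζ-ζ^6],[ζ^4-ζ^3, ζ-ζ^6, ζ^2-ζ^5]], all viewed as elements of GL_3(K). Then the subgroup of GL_3(K) generated by g, h, and i is a simple group. -/

import Mathlib

open scoped MatrixGroups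

/-- The 7th cyclotomic field `K = ℚ(ζ)`. -/
noncomputable abbrev K7 : Type := CyclotomicField 7 ℚ

/-- The diagonal matrix `g = diag(ζ⁴, ζ², ζ)`. -/
noncomputable def matG (ζ : K7) : Matrix (Fin 3) (Fin 3) K7 :=
  Matrix.diagonal ![ζ ^ 4, ζ ^ 2, ζ]

/-- The cyclic permutation matrix `h`. -/
noncomputable def matH : Matrix (Fin 3) (Fin 3) K7 :=
  !![0, 1, 0; 0, 0, 1; 1, 0, 0]

/-- The matrix `i`, depending on a primitive 7th root of unity `ζ`. -/
noncomputable def matI (ζ : K7) : Matrix (Fin 3) (Fin 3) K7 :=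
  ((2 * ζ ^ 4 + 2 * ζ ^ 2 + 2 * ζ + 1) / 7) •
    !![ζ - ζ ^ 6, ζ ^ 2 - ζ ^ 5, ζ ^ 4 - ζ ^ 3;
       ζ ^ 2 - ζ ^ 5, ζ ^ 4 - ζ ^ 3, ζ - ζ ^ 6;
       ζ ^ 4 - ζ ^ 3, ζ - ζ ^ 6, ζ ^ 2 - ζ ^ 5]

/-! The matrices `g`, `h`, `i` are the operators by which the standard generators of `PSL₂(𝔽₇)` act
on the odd functions on `𝔽₇` in the Weil representation, so they satisfy the relations of
`PSL₂(𝔽₇)`. These relations and `g ≠ 1` force simplicity. On the one hand, they give the Bruhat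
decomposition of the generated group into `B` and `BiB`, where `B = ⟨g⟩⟨h⟩`. On the other hand,
modulo a normal subgroup `N`, triviality of one of `g`, `h`, `i` implies triviality of the others:
`h = 1` gives `g ^ 3 = 1 = g ^ 7`, `g = 1` gives `i = i * i = 1`, and `i = 1` gives
`h ^ 2 = 1 = h ^ 3`. A nontrivial element of `N ∩ B` puts `g` or `h` into `N` because `7` and `3`
are coprime; an element of `N ∩ BiB` makes `i` congruent to an element of `B`, so that its image has
order dividing `21` as well as `2`, and hence puts `i` into `N`. -/

section PrimeOrder

variable {G : Type*} [Group G] {x y : G} {m n p : ℕ}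

theorem pow_eq_one_of_mem_zpowers (hx : x ^ n = 1) (hy : y ∈ Subgroup.zpowers x) : y ^ n = 1 :=
  orderOf_dvd_iff_pow_eq_one.mp <|
    (orderOf_dvd_of_mem_zpowers hy).trans (orderOf_dvd_of_pow_eq_one hx)

theorem eq_one_of_pow_eq_one_of_coprime (hmn : m.Coprime n) (hm : x ^ m = 1) (hn : x ^ n = 1) :
    x = 1 := by
  simpa [hmn.gcd_eq_one] using pow_gcd_eq_one.mpr ⟨hm, hn⟩

theorem zpow_eq_zpow_of_intCast_eq (hx : x ^ n = 1) {a b : ℤ} (hab : (a : ZMod n) = b) :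
    x ^ a = x ^ b := by
  rw [zpow_eq_zpow_iff_modEq]
  exact ((ZMod.intCast_eq_intCast_iff a b n).mp hab).of_dvd <|
    Int.natCast_dvd_natCast.mpr (orderOf_dvd_of_pow_eq_one hx)

theorem mem_zpowers_of_mem_zpowers_of_ne_one [Fact p.Prime] (hx : x ^ p = 1)
    (hy : y ∈ Subgroup.zpowers x) (hy1 : y ≠ 1) : x ∈ Subgroup.zpowers y := by
  obtain ⟨k, rfl⟩ := hy
  have hx1 : x ≠ 1 := by
    rintro rfl
    exact hy1 (one_zpow k)
  have hp : orderOf x = p := orderOf_eq_prime hx hx1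
  rw [mem_zpowers_zpow_iff, hp, Int.gcd_comm, ← Int.isCoprime_iff_gcd_eq_one,
    (Nat.prime_iff_prime_int.mp Fact.out).coprime_iff_not_dvd, ← hp, orderOf_dvd_iff_zpow_eq_one]
  exact hy1

end PrimeOrder

/-- The relations between the generators `g : z ↦ z + 1`, `h : z ↦ 4 * z` and `i : z ↦ -1 / z` of
Klein's group `PSL₂(𝔽₇)` of order 168. They are stated in a monoid so that they can be checked for
matrices and then lifted to units. -/
structure IsKleinTriple {M : Type*} [Monoid M] (g h i : M) : Prop where
  g_pow_seven : g ^ 7 = 1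
  h_pow_three : h ^ 3 = 1
  i_mul_self : i * i = 1
  h_mul_g : h * g = g ^ 4 * h
  h_mul_i_mul_h : h * i * h = i
  g_mul_i_mul_g_mul_i_mul_g : g * (i * g * i) * g = i

/-- The subgroup `B` generated by `g` and `h`; for the generators of `PSL₂(𝔽₇)` in `IsKleinTriple`
it is the Borel subgroup of affine maps, the stabilizer of `∞`. -/
def borelSubgroup {G : Type*} [Group G] (g h : G) : Subgroup G :=
  Subgroup.zpowers g ⊔ Subgroup.zpowers h

/-- The double coset `BiB` of `B = borelSubgroup g h`, the big cell of the Bruhat decomposition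
`B ∪ BiB`. -/
def bigCell {G : Type*} [Group G] (g h i : G) : Set G :=
  DoubleCoset.doubleCoset i (borelSubgroup g h) (borelSubgroup g h)

section BruhatCells

variable {G : Type*} [Group G] {g h i b x : G}

theorem zpowers_le_borelSubgroup_left : Subgroup.zpowers g ≤ borelSubgroup g h := le_sup_left

theorem zpowers_le_borelSubgroup_right : Subgroup.zpowers h ≤ borelSubgroup g h := le_sup_right

theorem self_mem_bigCell : i ∈ bigCell g h i := DoubleCoset.mem_doubleCoset_self _ _ i

theorem mul_mem_bigCell (hb : b ∈ borelSubgroup g h) (hx : x ∈ bigCell g h i) :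
    b * x ∈ bigCell g h i := by
  obtain ⟨c, hc, d, hd, rfl⟩ := DoubleCoset.mem_doubleCoset.mp hx
  exact DoubleCoset.mem_doubleCoset.mpr ⟨b * c, mul_mem hb hc, d, hd, by group⟩

theorem mem_bigCell_mul (hx : x ∈ bigCell g h i) (hb : b ∈ borelSubgroup g h) :
    x * b ∈ bigCell g h i := by
  obtain ⟨c, hc, d, hd, rfl⟩ := DoubleCoset.mem_doubleCoset.mp hx
  exact DoubleCoset.mem_doubleCoset.mpr ⟨c, hc, d * b, mul_mem hd hb, by group⟩

end BruhatCells

namespace IsKleinTriple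

section Monoid

variable {M N : Type*} [Monoid M] [Monoid N] {g h i : M}

theorem map (f : M →* N) (hr : IsKleinTriple g h i) : IsKleinTriple (f g) (f h) (f i) where
  g_pow_seven := by simpa using congrArg f hr.g_pow_seven
  h_pow_three := by simpa using congrArg f hr.h_pow_three
  i_mul_self := by simpa using congrArg f hr.i_mul_self
  h_mul_g := by simpa using congrArg f hr.h_mul_g
  h_mul_i_mul_h := by simpa using congrArg f hr.h_mul_i_mul_h
  g_mul_i_mul_g_mul_i_mul_g := by simpa using congrArg f hr.g_mul_i_mul_g_mul_i_mul_g

theorem of_map {f : M →* N} (hf : Function.Injective f) (hr : IsKleinTriple (f g) (f h) (f i)) :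
    IsKleinTriple g h i where
  g_pow_seven := hf <| by simpa using hr.g_pow_seven
  h_pow_three := hf <| by simpa using hr.h_pow_three
  i_mul_self := hf <| by simpa using hr.i_mul_self
  h_mul_g := hf <| by simpa using hr.h_mul_g
  h_mul_i_mul_h := hf <| by simpa using hr.h_mul_i_mul_h
  g_mul_i_mul_g_mul_i_mul_g := hf <| by simpa using hr.g_mul_i_mul_g_mul_i_mul_g

end Monoid

variable {G : Type*} [Group G] {g h i : G} {N : Subgroup G}

theorem g_eq_one_of_h_eq_one (hr : IsKleinTriple g h i) (hh : h = 1) : g = 1 := by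
  have hg : g = g ^ 3 * g := by simpa [hh, ← pow_succ] using hr.h_mul_g
  exact eq_one_of_pow_eq_one_of_coprime (by norm_num) (right_eq_mul.mp hg) hr.g_pow_seven

theorem i_eq_one_of_g_eq_one (hr : IsKleinTriple g h i) (hg : g = 1) : i = 1 := by
  simpa [hg, hr.i_mul_self] using hr.g_mul_i_mul_g_mul_i_mul_g.symm

theorem h_eq_one_of_i_eq_one (hr : IsKleinTriple g h i) (hi : i = 1) : h = 1 := by
  have hh : h ^ 2 = 1 := by simpa [hi, ← pow_two] using hr.h_mul_i_mul_h
  exact eq_one_of_pow_eq_one_of_coprime (by norm_num) hh hr.h_pow_three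

theorem tfae_mem (hr : IsKleinTriple g h i) (N : Subgroup G) [N.Normal] :
    [g ∈ N, h ∈ N, i ∈ N].TFAE := by
  have hπ := hr.map (QuotientGroup.mk' N)
  simp only [← QuotientGroup.eq_one_iff (N := N)]
  tfae_have 2 → 1 := hπ.g_eq_one_of_h_eq_one
  tfae_have 1 → 3 := hπ.i_eq_one_of_g_eq_one
  tfae_have 3 → 2 := hπ.h_eq_one_of_i_eq_one
  tfae_finish

theorem closure_le (hr : IsKleinTriple g h i) [N.Normal] (hg : g ∈ N) :
    Subgroup.closure {g, h, i} ≤ N := by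
  have hh : h ∈ N := ((hr.tfae_mem N).out 0 1).mp hg
  have hi : i ∈ N := ((hr.tfae_mem N).out 0 2).mp hg
  simp [Subgroup.closure_le, Set.insert_subset_iff, hg, hh, hi]

theorem h_mul_g_mul_inv (hr : IsKleinTriple g h i) : h * g * h⁻¹ = g ^ 4 :=
  mul_inv_eq_of_eq_mul hr.h_mul_g

theorem h_pow_mul_g_mul_inv (hr : IsKleinTriple g h i) (n : ℕ) :
    h ^ n * g * (h ^ n)⁻¹ = g ^ 4 ^ n := by
  induction n with
  | zero => simp
  | succ n ih =>
    calc h ^ (n + 1) * g * (h ^ (n + 1))⁻¹ = h * (h ^ n * g * (h ^ n)⁻¹) * h⁻¹ := by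
          rw [pow_succ']; group
      _ = g ^ 4 ^ (n + 1) := by rw [ih, ← conj_pow, hr.h_mul_g_mul_inv, ← pow_mul, pow_succ']

theorem zpowers_h_le_normalizer (hr : IsKleinTriple g h i) :
    Subgroup.zpowers h ≤ Subgroup.normalizer (Subgroup.zpowers g) := by
  have hg : (g ^ 4) ^ 2 = g := by rw [← pow_mul, pow_succ, hr.g_pow_seven, one_mul]
  rw [Subgroup.zpowers_le, Subgroup.mem_normalizer_iff_map_conj_eq, MonoidHom.map_zpowers]
  refine le_antisymm ?_ ?_
  · simp [hr.h_mul_g_mul_inv]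
  · rw [Subgroup.zpowers_le]
    exact ⟨2, by simpa [hr.h_mul_g_mul_inv] using hg⟩

theorem mem_borelSubgroup_iff (hr : IsKleinTriple g h i) {b : G} :
    b ∈ borelSubgroup g h ↔ ∃ u ∈ Subgroup.zpowers g, ∃ t ∈ Subgroup.zpowers h, u * t = b := by
  rw [← SetLike.mem_coe, borelSubgroup,
    Subgroup.coe_mul_of_right_le_normalizer_left _ _ hr.zpowers_h_le_normalizer, Set.mem_mul]
  rfl

theorem pow_twentyone_eq_one_of_mem_borelSubgroup (hr : IsKleinTriple g h i) {b : G}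
    (hb : b ∈ borelSubgroup g h) : b ^ 21 = 1 := by
  obtain ⟨u, hu, t, ht, rfl⟩ := hr.mem_borelSubgroup_iff.mp hb
  have ht3 : t ^ 3 = 1 := pow_eq_one_of_mem_zpowers hr.h_pow_three ht
  have hconj {t : G} (ht : t ∈ Subgroup.zpowers h) : t * u * t⁻¹ ∈ Subgroup.zpowers g :=
    (Subgroup.mem_normalizer_iff.mp (hr.zpowers_h_le_normalizer ht) u).mp hu
  have hcube : (u * t) ^ 3 = u * (t * u * t⁻¹) * (t ^ 2 * u * (t ^ 2)⁻¹) := by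
    calc (u * t) ^ 3 = u * (t * u * t⁻¹) * (t ^ 2 * u * (t ^ 2)⁻¹) * t ^ 3 := by
          simp only [pow_succ, pow_zero, one_mul]; group
      _ = u * (t * u * t⁻¹) * (t ^ 2 * u * (t ^ 2)⁻¹) := by rw [ht3, mul_one]
  have hmem : (u * t) ^ 3 ∈ Subgroup.zpowers g := by
    rw [hcube]
    exact mul_mem (mul_mem hu (hconj ht)) (hconj (pow_mem ht 2))
  calc (u * t) ^ 21 = ((u * t) ^ 3) ^ 7 := by rw [← pow_mul]
    _ = 1 := pow_eq_one_of_mem_zpowers hr.g_pow_seven hmem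

theorem inv_i (hr : IsKleinTriple g h i) : i⁻¹ = i :=
  inv_eq_of_mul_eq_one_left hr.i_mul_self

theorem i_mul_cancel_left (hr : IsKleinTriple g h i) (x : G) : i * (i * x) = x := by
  rw [← mul_assoc, hr.i_mul_self, one_mul]

theorem i_mul_g_mul_i (hr : IsKleinTriple g h i) : i * g * i = g⁻¹ * i * g⁻¹ :=
  eq_mul_inv_of_mul_eq <| eq_inv_mul_of_mul_eq <| by
    simpa only [mul_assoc] using hr.g_mul_i_mul_g_mul_i_mul_g

theorem i_mul_h_mul_inv (hr : IsKleinTriple g h i) : i * h * i⁻¹ = h⁻¹ := by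
  rw [hr.inv_i, eq_inv_iff_mul_eq_one, mul_assoc, mul_assoc, ← mul_assoc h, hr.h_mul_i_mul_h,
    hr.i_mul_self]

theorem i_mul_mul_i_of_mem_zpowers_h (hr : IsKleinTriple g h i) {t : G}
    (ht : t ∈ Subgroup.zpowers h) : i * t * i = t⁻¹ := by
  obtain ⟨n, rfl⟩ := ht
  calc i * h ^ n * i = i * h ^ n * i⁻¹ := by rw [hr.inv_i]
    _ = (h ^ n)⁻¹ := by rw [← conj_zpow, hr.i_mul_h_mul_inv, inv_zpow]

theorem i_mul_pow_four_pow_mul_i (hr : IsKleinTriple g h i) (n : ℕ) :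
    i * g ^ 4 ^ n * i = (h ^ n)⁻¹ * (i * g * i) * h ^ n := by
  have hn : i * h ^ n * i = (h ^ n)⁻¹ :=
    hr.i_mul_mul_i_of_mem_zpowers_h (Subgroup.npow_mem_zpowers h n)
  have hn' : i * (h ^ n)⁻¹ * i = h ^ n := by
    simpa using hr.i_mul_mul_i_of_mem_zpowers_h (inv_mem (Subgroup.npow_mem_zpowers h n))
  rw [← hr.h_pow_mul_g_mul_inv]
  nth_rw 1 [← hn, ← hn']
  simp only [mul_assoc, hr.i_mul_cancel_left, hr.i_mul_self, mul_one]

-- `4` generates the nonzero squares modulo `7`, and `-1` is not a square.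
theorem exists_eq_pow_four_pow_or_inv (hr : IsKleinTriple g h i) {u : G}
    (hu : u ∈ Subgroup.zpowers g) (hu1 : u ≠ 1) : ∃ n : ℕ, u = g ^ 4 ^ n ∨ u⁻¹ = g ^ 4 ^ n := by
  obtain ⟨k, rfl⟩ := hu
  have hk : (k : ZMod 7) ≠ 0 := fun hk => hu1 <| by
    simpa using zpow_eq_zpow_of_intCast_eq hr.g_pow_seven (hk.trans Int.cast_zero.symm)
  have hres : ∀ r : ZMod 7, r ≠ 0 → ∃ n : Fin 3, r = 4 ^ n.val ∨ -r = 4 ^ n.val := by decide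
  obtain ⟨n, hn⟩ := hres k hk
  refine ⟨n, hn.imp (fun hn => ?_) (fun hn => ?_)⟩
  · exact_mod_cast zpow_eq_zpow_of_intCast_eq hr.g_pow_seven (b := (4 : ℤ) ^ n.val)
      (by exact_mod_cast hn)
  · rw [← zpow_neg]
    exact_mod_cast zpow_eq_zpow_of_intCast_eq hr.g_pow_seven (b := (4 : ℤ) ^ n.val)
      (by exact_mod_cast hn)

theorem inv_mem_bigCell (hr : IsKleinTriple g h i) {x : G} (hx : x ∈ bigCell g h i) :
    x⁻¹ ∈ bigCell g h i := by
  obtain ⟨c, hc, d, hd, rfl⟩ := DoubleCoset.mem_doubleCoset.mp hx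
  refine DoubleCoset.mem_doubleCoset.mpr ⟨d⁻¹, inv_mem hd, c⁻¹, inv_mem hc, ?_⟩
  simp only [mul_inv_rev, hr.inv_i, mul_assoc]

theorem i_mul_mul_i_mem_bigCell (hr : IsKleinTriple g h i) {u : G}
    (hu : u ∈ Subgroup.zpowers g) (hu1 : u ≠ 1) : i * u * i ∈ bigCell g h i := by
  have hg : g⁻¹ ∈ borelSubgroup g h :=
    inv_mem (zpowers_le_borelSubgroup_left (Subgroup.mem_zpowers g))
  have hh (n : ℕ) : h ^ n ∈ borelSubgroup g h :=
    zpowers_le_borelSubgroup_right (Subgroup.npow_mem_zpowers h n)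
  have hpow (n : ℕ) : i * g ^ 4 ^ n * i ∈ bigCell g h i := by
    rw [hr.i_mul_pow_four_pow_mul_i, hr.i_mul_g_mul_i]
    exact mem_bigCell_mul (mul_mem_bigCell (inv_mem (hh n))
      (mem_bigCell_mul (mul_mem_bigCell hg self_mem_bigCell) hg)) (hh n)
  obtain ⟨n, hn | hn⟩ := hr.exists_eq_pow_four_pow_or_inv hu hu1
  · exact hn ▸ hpow n
  · simpa [← hn, hr.inv_i, mul_assoc] using hr.inv_mem_bigCell (hpow n)

theorem mem_bigCell_mul_i (hr : IsKleinTriple g h i) {x : G} (hx : x ∈ bigCell g h i) :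
    x * i ∈ borelSubgroup g h ∨ x * i ∈ bigCell g h i := by
  obtain ⟨b, hb, c, hc, rfl⟩ := DoubleCoset.mem_doubleCoset.mp hx
  obtain ⟨u, hu, t, ht, rfl⟩ := hr.mem_borelSubgroup_iff.mp hc
  have ht' : t⁻¹ ∈ borelSubgroup g h := inv_mem (zpowers_le_borelSubgroup_right ht)
  have hx : b * i * (u * t) * i = b * (i * u * i) * t⁻¹ := by
    rw [← hr.i_mul_mul_i_of_mem_zpowers_h ht]
    simp only [mul_assoc, hr.i_mul_cancel_left]
  change b * i * (u * t) * i ∈ _ ∨ b * i * (u * t) * i ∈ _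
  rw [hx]
  obtain rfl | hu1 := eq_or_ne u 1
  · left
    simpa [hr.i_mul_self] using mul_mem hb ht'
  · right
    exact mem_bigCell_mul (mul_mem_bigCell hb (hr.i_mul_mul_i_mem_bigCell hu hu1)) ht'

theorem mem_borelSubgroup_or_mem_bigCell (hr : IsKleinTriple g h i) {x : G}
    (hx : x ∈ Subgroup.closure {g, h, i}) : x ∈ borelSubgroup g h ∨ x ∈ bigCell g h i := by
  have hB {x b : G} (hb : b ∈ borelSubgroup g h) :
      x ∈ borelSubgroup g h ∨ x ∈ bigCell g h i →
        x * b ∈ borelSubgroup g h ∨ x * b ∈ bigCell g h i :=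
    Or.imp (mul_mem · hb) (mem_bigCell_mul · hb)
  have hi {x : G} (hx : x ∈ borelSubgroup g h ∨ x ∈ bigCell g h i) :
      x * i ∈ borelSubgroup g h ∨ x * i ∈ bigCell g h i :=
    hx.elim (fun hx => Or.inr (mul_mem_bigCell hx self_mem_bigCell)) hr.mem_bigCell_mul_i
  have hg : g ∈ borelSubgroup g h := zpowers_le_borelSubgroup_left (Subgroup.mem_zpowers g)
  have hh : h ∈ borelSubgroup g h := zpowers_le_borelSubgroup_right (Subgroup.mem_zpowers h)
  induction hx using Subgroup.closure_induction_right with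
  | one => exact Or.inl (one_mem _)
  | mul_right x _ y hy ih =>
    obtain rfl | rfl | rfl := hy
    exacts [hB hg ih, hB hh ih, hi ih]
  | mul_inv_cancel x _ y hy ih =>
    obtain rfl | rfl | rfl := hy
    exacts [hB (inv_mem hg) ih, hB (inv_mem hh) ih, hr.inv_i.symm ▸ hi ih]

theorem g_mem_of_mem_borelSubgroup (hr : IsKleinTriple g h i) [N.Normal] {x : G}
    (hxB : x ∈ borelSubgroup g h) (hxN : x ∈ N) (hx1 : x ≠ 1) : g ∈ N := by
  have : Fact (Nat.Prime 7) := ⟨by norm_num⟩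
  obtain ⟨u, hu, t, ht, rfl⟩ := hr.mem_borelSubgroup_iff.mp hxB
  have hut : (u : G ⧸ N) = (t : G ⧸ N)⁻¹ :=
    eq_inv_of_mul_eq_one_left ((QuotientGroup.eq_one_iff (u * t)).mpr hxN)
  have hu7 : (u : G ⧸ N) ^ 7 = 1 :=
    congrArg (QuotientGroup.mk' N) (pow_eq_one_of_mem_zpowers hr.g_pow_seven hu)
  have ht3 : (t : G ⧸ N) ^ 3 = 1 :=
    congrArg (QuotientGroup.mk' N) (pow_eq_one_of_mem_zpowers hr.h_pow_three ht)
  have huN : u ∈ N := by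
    rw [← QuotientGroup.eq_one_iff]
    exact eq_one_of_pow_eq_one_of_coprime (m := 7) (n := 3) (by norm_num) hu7
      (by rw [hut, inv_pow, ht3, inv_one])
  have htN : t ∈ N := (Subgroup.mul_mem_cancel_left N huN).mp hxN
  obtain rfl | hu1 := eq_or_ne u 1
  · have ht1 : t ≠ 1 := by simpa using hx1
    have hh : h ∈ N := Subgroup.zpowers_le.mpr htN <|
      mem_zpowers_of_mem_zpowers_of_ne_one hr.h_pow_three ht ht1
    exact ((hr.tfae_mem N).out 0 1).mpr hh
  · exact Subgroup.zpowers_le.mpr huN <|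
      mem_zpowers_of_mem_zpowers_of_ne_one hr.g_pow_seven hu hu1

theorem g_mem_of_mem_bigCell (hr : IsKleinTriple g h i) [N.Normal] {x : G}
    (hxC : x ∈ bigCell g h i) (hxN : x ∈ N) : g ∈ N := by
  obtain ⟨b, hb, c, hc, rfl⟩ := DoubleCoset.mem_doubleCoset.mp hxC
  have hbic : (c * b * i : G ⧸ N) = 1 := by
    rw [mul_assoc]
    exact (QuotientGroup.eq_one_iff (c * (b * i))).mpr (Subgroup.Normal.mem_comm inferInstance hxN)
  have hi2 : (i : G ⧸ N) ^ 2 = 1 := by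
    rw [pow_two]
    exact congrArg (QuotientGroup.mk' N) hr.i_mul_self
  have hi21 : (i : G ⧸ N) ^ 21 = 1 := by
    rw [eq_inv_of_mul_eq_one_right hbic, inv_pow, inv_eq_one]
    exact congrArg (QuotientGroup.mk' N)
      (hr.pow_twentyone_eq_one_of_mem_borelSubgroup (mul_mem hc hb))
  have hi : i ∈ N := (QuotientGroup.eq_one_iff i).mp <|
    eq_one_of_pow_eq_one_of_coprime (by norm_num) hi2 hi21
  exact ((hr.tfae_mem N).out 0 2).mpr hi

theorem isSimpleGroup (hr : IsKleinTriple g h i) (hg : g ≠ 1)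
    (hgen : Subgroup.closure {g, h, i} = ⊤) : IsSimpleGroup G where
  exists_pair_ne := ⟨g, 1, hg⟩
  eq_bot_or_eq_top_of_normal N hN := by
    refine or_iff_not_imp_left.mpr fun hbot => ?_
    obtain ⟨x, hxN, hx1⟩ := N.bot_or_exists_ne_one.resolve_left hbot
    have hgN : g ∈ N :=
      (hr.mem_borelSubgroup_or_mem_bigCell (hgen ▸ Subgroup.mem_top x)).elim
        (hr.g_mem_of_mem_borelSubgroup · hxN hx1) (hr.g_mem_of_mem_bigCell · hxN)
    exact top_le_iff.mp (hgen ▸ hr.closure_le hgN)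

theorem isSimpleGroup_closure (hr : IsKleinTriple g h i) (hg : g ≠ 1) :
    IsSimpleGroup (Subgroup.closure {g, h, i}) := by
  have hmem : {g, h, i} ⊆ (Subgroup.closure {g, h, i} : Set G) := Subgroup.subset_closure
  simp only [Set.insert_subset_iff, Set.singleton_subset_iff] at hmem
  obtain ⟨hgm, hhm, him⟩ := hmem
  let g' : Subgroup.closure {g, h, i} := ⟨g, hgm⟩
  let h' : Subgroup.closure {g, h, i} := ⟨h, hhm⟩
  let i' : Subgroup.closure {g, h, i} := ⟨i, him⟩
  have hr' : IsKleinTriple g' h' i' := of_map (Subgroup.subtype_injective _) hr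
  refine hr'.isSimpleGroup (fun h1 => hg (congrArg Subtype.val h1)) ?_
  rw [← Subgroup.closure_closure_coe_preimage]
  congr 1
  ext x
  simp [g', h', i', Subtype.ext_iff]

end IsKleinTriple

section WeilRepresentation

open Matrix Finset

variable {R : Type*} [CommRing R] {ζ : R}

/-- Multiplication by the Gaussian `x ↦ ζ ^ (x² / 2) = ζ ^ (4 x²)` on odd functions on `𝔽₇`. Here
and below an odd function is given by its values at `x = 1, 2, 4`, the nonzero squares. -/
def gaussianMatrix (ζ : R) : Matrix (Fin 3) (Fin 3) R :=
  diagonal ![ζ ^ 4, ζ ^ 2, ζ]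

/-- The dilation `f ↦ (x ↦ f (2 x))` of odd functions on `𝔽₇`. -/
def dilationMatrix (R : Type*) [CommRing R] : Matrix (Fin 3) (Fin 3) R :=
  !![0, 1, 0; 0, 0, 1; 1, 0, 0]

/-- The Fourier transform on odd functions on `𝔽₇`, without its normalizing factor: the entry at
`(x, y)` is `ζ ^ (x y) - ζ ^ (-x y)`. -/
def sineMatrix (ζ : R) : Matrix (Fin 3) (Fin 3) R :=
  !![ζ - ζ ^ 6, ζ ^ 2 - ζ ^ 5, ζ ^ 4 - ζ ^ 3;
     ζ ^ 2 - ζ ^ 5, ζ ^ 4 - ζ ^ 3, ζ - ζ ^ 6;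
     ζ ^ 4 - ζ ^ 3, ζ - ζ ^ 6, ζ ^ 2 - ζ ^ 5]

/-- The quadratic Gauss sum `∑ ζ ^ (x²)` over `x ∈ 𝔽₇`, with equal terms collected. It provides the
normalizing factor of `sineMatrix`. -/
def gaussSumSeven (ζ : R) : R :=
  2 * ζ ^ 4 + 2 * ζ ^ 2 + 2 * ζ + 1

theorem gaussSumSeven_sq (hζ : ∑ k ∈ range 7, ζ ^ k = 0) : gaussSumSeven ζ ^ 2 = -7 := by
  simp only [sum_range_succ, sum_range_zero] at hζ
  grind [gaussSumSeven]

theorem gaussianMatrix_pow_seven (hζ : ζ ^ 7 = 1) : gaussianMatrix ζ ^ 7 = 1 := by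
  have hpow (n : ℕ) : (ζ ^ n) ^ 7 = 1 := by rw [pow_right_comm, hζ, one_pow]
  rw [gaussianMatrix, diagonal_pow, ← diagonal_one]
  congr 1
  ext j
  fin_cases j
  exacts [hpow 4, hpow 2, hζ]

theorem dilationMatrix_pow_three : dilationMatrix R ^ 3 = 1 := by
  ext j k
  fin_cases j <;> fin_cases k <;>
    simp [pow_succ, dilationMatrix, Matrix.mul_apply, Fin.sum_univ_three]

theorem dilationMatrix_mul_gaussianMatrix (hζ : ζ ^ 7 = 1) :
    dilationMatrix R * gaussianMatrix ζ = gaussianMatrix ζ ^ 4 * dilationMatrix R := by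
  rw [gaussianMatrix, diagonal_pow]
  ext j k
  rw [mul_diagonal, diagonal_mul]
  fin_cases j <;> fin_cases k <;> simp [dilationMatrix] <;> grind

theorem dilationMatrix_mul_sineMatrix_mul_dilationMatrix :
    dilationMatrix R * sineMatrix ζ * dilationMatrix R = sineMatrix ζ := by
  ext j k
  fin_cases j <;> fin_cases k <;>
    simp [dilationMatrix, sineMatrix, Matrix.mul_apply, Fin.sum_univ_three]

theorem sineMatrix_mul_self (hζ : ∑ k ∈ range 7, ζ ^ k = 0) :
    sineMatrix ζ * sineMatrix ζ = (-7 : R) • 1 := by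
  simp only [sum_range_succ, sum_range_zero] at hζ
  ext j k
  fin_cases j <;> fin_cases k <;>
    simp [sineMatrix, Matrix.mul_apply, Fin.sum_univ_three] <;> grind

-- Entrywise this completes the square `4 z² + s z = 4 (z + s)² - 4 s²`, `s = x ± y`, in the
-- Gauss sums `∑ ζ ^ (4 z² + s z)` over `z ∈ 𝔽₇`.
theorem gaussianMatrix_sineMatrix_braid (hζ : ∑ k ∈ range 7, ζ ^ k = 0) :
    gaussianMatrix ζ * (sineMatrix ζ * gaussianMatrix ζ * sineMatrix ζ) * gaussianMatrix ζ =
      -gaussSumSeven ζ • sineMatrix ζ := by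
  simp only [sum_range_succ, sum_range_zero] at hζ
  ext j k
  rw [gaussianMatrix, mul_diagonal, diagonal_mul, Matrix.mul_apply, Fin.sum_univ_three]
  simp only [mul_diagonal]
  fin_cases j <;> fin_cases k <;> simp [sineMatrix, gaussSumSeven] <;> grind

theorem isKleinTriple_gaussianMatrix {K : Type*} [Field K] {ζ : K} (hζ : IsPrimitiveRoot ζ 7) :
    IsKleinTriple (gaussianMatrix ζ) (dilationMatrix K) ((gaussSumSeven ζ / 7) • sineMatrix ζ) := by
  have hsum : ∑ k ∈ range 7, ζ ^ k = 0 := hζ.geom_sum_eq_zero (by norm_num)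
  have hθ : gaussSumSeven ζ ^ 2 = -7 := gaussSumSeven_sq hsum
  have h7 : (7 : K) ≠ 0 := by
    have := hζ.neZero'
    exact_mod_cast this.ne
  have hscale : gaussSumSeven ζ / 7 * (gaussSumSeven ζ / 7) * -7 = 1 := by
    field_simp
    linear_combination -hθ
  have hbraid :
      gaussSumSeven ζ / 7 * (gaussSumSeven ζ / 7) * -gaussSumSeven ζ = gaussSumSeven ζ / 7 := by
    field_simp
    linear_combination (-gaussSumSeven ζ) * hθ
  exact
    { g_pow_seven := gaussianMatrix_pow_seven hζ.pow_eq_one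
      h_pow_three := dilationMatrix_pow_three
      i_mul_self := by
        rw [smul_mul_smul_comm, sineMatrix_mul_self hsum, smul_smul, hscale, one_smul]
      h_mul_g := dilationMatrix_mul_gaussianMatrix hζ.pow_eq_one
      h_mul_i_mul_h := by
        rw [mul_smul_comm, smul_mul_assoc, dilationMatrix_mul_sineMatrix_mul_dilationMatrix]
      g_mul_i_mul_g_mul_i_mul_g := by
        rw [smul_mul_assoc, smul_mul_smul_comm, mul_smul_comm, smul_mul_assoc,
          gaussianMatrix_sineMatrix_braid hsum, smul_smul, hbraid] }

theorem gaussianMatrix_ne_one (hζ : ζ ≠ 1) : gaussianMatrix ζ ≠ 1 := fun h =>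
  hζ <| by simpa [gaussianMatrix] using congrFun₂ h 2 2

end WeilRepresentation

theorem stmt13_general {K : Type*} [Field K] {ζ : K} (hζ : IsPrimitiveRoot ζ 7)
    {g h i : GL (Fin 3) K} (hg : (g : Matrix (Fin 3) (Fin 3) K) = gaussianMatrix ζ)
    (hh : (h : Matrix (Fin 3) (Fin 3) K) = dilationMatrix K)
    (hi : (i : Matrix (Fin 3) (Fin 3) K) = (gaussSumSeven ζ / 7) • sineMatrix ζ) :
    IsSimpleGroup (Subgroup.closure {g, h, i}) := by
  have hr : IsKleinTriple g h i := by
    refine IsKleinTriple.of_map (f := Units.coeHom _) Units.val_injective ?_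
    simpa only [Units.coeHom_apply, hg, hh, hi] using isKleinTriple_gaussianMatrix hζ
  refine hr.isSimpleGroup_closure fun h1 => gaussianMatrix_ne_one (hζ.ne_one (by norm_num)) ?_
  rw [← hg, h1, Units.val_one]

/-- The subgroup of `GL₃(K)` generated by `g`, `h`, and `i` is simple. -/
theorem stmt13 (ζ : K7) (hζ : IsPrimitiveRoot ζ 7)
    (gU hU iU : GL (Fin 3) K7)
    (hg : (gU : Matrix (Fin 3) (Fin 3) K7) = matG ζ)
    (hh : (hU : Matrix (Fin 3) (Fin 3) K7) = matH)
    (hi : (iU : Matrix (Fin 3) (Fin 3) K7) = matI ζ) :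
    IsSimpleGroup (Subgroup.closure {gU, hU, iU} : Subgroup (GL (Fin 3) K7)) :=
  stmt13_general hζ hg hh hi
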